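/- Let n ≥ 1 be a natural number, let a ∈ Λ̃_n, and let u be a nontrivial solution of the antiperiodic problem u'' + a(x)u = 0 on (0,T), u(0) + u(T) = 0, u'(0) + u'(T) = 0, normalized so that u(0) = u(T) = 0. Then the set of zeros of u in [0,T) is finite, its cardinality m is an odd number, and m ≥ 2n+1. Moreover, if x < y are a zero of u and a zero of u' (in either order) with no zero of u or of u' strictly between them, then y − x ≤ T/(2(2n−1)). -/

import Mathlib

open MeasureTheory Set Real

/-- `u` is a solution of `u'' + a·u = 0` on `[c,d]`, with derivative function `v`. -/
def IsSolOn (a u v : ℝ → ℝ) (c d : ℝ) : Prop :=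
  (∀ x ∈ Set.Icc c d, HasDerivWithinAt u (v x) (Set.Icc c d) x) ∧
  (∀ x ∈ Set.Icc c d, v x = v c - ∫ t in c..x, a t * u t)

/-- Membership in `L_T`: measurable, `T`-periodic and integrable on `[0,T]`. -/
def MemLT (T : ℝ) (a : ℝ → ℝ) : Prop :=
  Measurable a ∧ (∀ x, a (x + T) = a x) ∧ IntegrableOn a (Set.Icc 0 T)

/-- `c ≺ d` : `c ≤ d` a.e. on `[0,T]` and `c < d` on a set of positive measure. -/
def Prec (T : ℝ) (c d : ℝ → ℝ) : Prop :=
  (∀ᵐ x ∂(volume.restrict (Set.Icc 0 T)), c x ≤ d x) ∧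
  0 < volume {x ∈ Set.Icc 0 T | c x < d x}

/-- `(u,v)` solves the periodic problem `u'' + a u = 0`, `u(0)=u(T)`, `u'(0)=u'(T)`. -/
def PeriodicSol (T : ℝ) (a u v : ℝ → ℝ) : Prop :=
  IsSolOn a u v 0 T ∧ u 0 = u T ∧ v 0 = v T

/-- `(u,v)` solves the antiperiodic problem `u'' + a u = 0`, `u(0)+u(T)=0`, `u'(0)+u'(T)=0`. -/
def AntiperiodicSol (T : ℝ) (a u v : ℝ → ℝ) : Prop :=
  IsSolOn a u v 0 T ∧ u 0 + u T = 0 ∧ v 0 + v T = 0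

/-- The `(2n-1)`-st periodic eigenvalue `λ_{2n-1} = 4 n² π² / T²`. -/
noncomputable def lam (T : ℝ) (n : ℕ) : ℝ := 4 * (n : ℝ) ^ 2 * Real.pi ^ 2 / T ^ 2

/-- The `(2n-1)`-st antiperiodic eigenvalue `λ̃_{2n-1} = (2n-1)² π² / T²`. -/
noncomputable def lamT (T : ℝ) (n : ℕ) : ℝ := (2 * (n : ℝ) - 1) ^ 2 * Real.pi ^ 2 / T ^ 2

/-- The set `Λ_n`. -/
def LambdaN (T : ℝ) (n : ℕ) : Set (ℝ → ℝ) :=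
  {a | MemLT T a ∧ Prec T (fun _ => lam T n) a ∧
    ∃ u v : ℝ → ℝ, PeriodicSol T a u v ∧ ∃ x ∈ Set.Icc 0 T, u x ≠ 0}

/-- The set `Λ̃_n`. -/
def LambdaTildeN (T : ℝ) (n : ℕ) : Set (ℝ → ℝ) :=
  {a | MemLT T a ∧ Prec T (fun _ => lamT T n) a ∧
    ∃ u v : ℝ → ℝ, AntiperiodicSol T a u v ∧ ∃ x ∈ Set.Icc 0 T, u x ≠ 0}

/-- The constant `β_{1,n}` of the periodic `L¹` Lyapunov inequality. -/
noncomputable def beta1 (T : ℝ) (n : ℕ) : ℝ :=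
  8 * Real.pi * (n : ℝ) * ((n : ℝ) + 1) / T * Real.cot ((n : ℝ) * Real.pi / (2 * ((n : ℝ) + 1)))

/-- The constant `β̃_{1,n}` of the antiperiodic `L¹` Lyapunov inequality. -/
noncomputable def betaT1 (T : ℝ) (n : ℕ) : ℝ :=
  2 * Real.pi * (2 * (n : ℝ) - 1) * (2 * (n : ℝ) + 1) / T *
    Real.cot ((2 * (n : ℝ) - 1) * Real.pi / (2 * (2 * (n : ℝ) + 1)))

/-!
Put `w = (2n-1)π/T`, so that `λ̃_{2n-1} = w²`. For `u'' + au = 0` and `s = sin (φ + w(x - p))` the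
Wronskian `u s' - u' s` has derivative `(a - w²) u s`, so it is monotone where `u` and `s` are both
positive. Comparison with `φ = 0` shows that consecutive zeros of `u` are at most `π / w` apart,
with equality only if `a = w²` almost everywhere in between; comparison with `φ = 0` or
`φ = π / 2`, according to the sign of `u'`, bounds an interval on which `u` and `u'` have no zero
by `π / (2w)`.

The zeros are simple (Grönwall's inequality for `u² + u'²`), so they are isolated and `u'` changes
sign from one to the next. Hence `u' T = -u' 0` forces their number `m` on `[0, T)` to be odd. The
`m` gaps cover `[0, T]`, and `a` is not almost everywhere `w²`, so `T < m π / w = m T / (2n-1)`.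
Thus `m ≥ 2n`, and by parity `m ≥ 2n + 1`.
-/

open Filter Topology

theorem absolutelyContinuousOnInterval_of_dist_le {X Y : Type*} [PseudoMetricSpace X]
    [PseudoMetricSpace Y] {f : ℝ → X} {g : ℝ → Y} {p q K : ℝ}
    (hg : AbsolutelyContinuousOnInterval g p q)
    (hfg : ∀ x ∈ uIcc p q, ∀ y ∈ uIcc p q, dist (f x) (f y) ≤ K * dist (g x) (g y)) :
    AbsolutelyContinuousOnInterval f p q := by
  refine squeeze_zero' (.of_forall fun E => Finset.sum_nonneg fun _ _ => dist_nonneg) ?_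
    (by simpa only [mul_zero] using Tendsto.const_mul K hg)
  refine eventually_inf_principal.2 (.of_forall fun E hE => ?_)
  rw [Finset.mul_sum]
  exact Finset.sum_le_sum fun i hi => hfg _ (hE.1 i hi).1 _ (hE.1 i hi).2

theorem absolutelyContinuousOnInterval_exp {f : ℝ → ℝ} {p q : ℝ}
    (hf : AbsolutelyContinuousOnInterval f p q) :
    AbsolutelyContinuousOnInterval (fun x => exp (f x)) p q := by
  obtain ⟨C, hC⟩ := hf.exists_bound
  obtain ⟨K, hK⟩ := (contDiff_exp (n := 1)).contDiffOn.exists_lipschitzOnWith one_ne_zero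
    (convex_Icc (-C) C) isCompact_Icc
  have hmem : ∀ x ∈ uIcc p q, f x ∈ Icc (-C) C := fun x hx => abs_le.1 (hC x hx)
  exact absolutelyContinuousOnInterval_of_dist_le hf fun x hx y hy =>
    hK.dist_le_mul _ (hmem x hx) _ (hmem y hy)

theorem le_mul_exp_integral_of_deriv_le {f k : ℝ → ℝ} {p q : ℝ} (hpq : p ≤ q)
    (hf : AbsolutelyContinuousOnInterval f p q) (hk : IntervalIntegrable k volume p q)
    (hfk : ∀ᵐ x ∂volume.restrict (Icc p q), deriv f x ≤ k x * f x) :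
    f q ≤ f p * exp (∫ t in p..q, k t) := by
  set K : ℝ → ℝ := fun x => ∫ t in p..x, k t
  have hK : AbsolutelyContinuousOnInterval K p q :=
    hk.absolutelyContinuousOnInterval_intervalIntegral left_mem_uIcc
  have hdf := (ae_restrict_iff' measurableSet_Icc).2 (uIcc_of_le hpq ▸ hf.ae_differentiableAt)
  have hdK := (ae_restrict_iff' measurableSet_Icc).2 (uIcc_of_le hpq ▸ hk.ae_hasDerivAt_integral)
  have hderiv : ∀ᵐ x ∂volume.restrict (Icc p q), 0 ≤ -deriv (fun x => f x * exp (-K x)) x := by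
    filter_upwards [hfk, hdf, hdK] with x hx hdfx hdKx
    have hKx : HasDerivAt K (k x) x := hdKx p ⟨le_rfl, hpq⟩
    rw [(hdfx.hasDerivAt.fun_mul hKx.fun_neg.exp).deriv]
    calc 0 ≤ (k x * f x - deriv f x) * exp (-K x) := mul_nonneg (sub_nonneg.2 hx) (exp_pos _).le
      _ = _ := by ring
  have hmono := intervalIntegral.integral_nonneg_of_ae_restrict hpq hderiv
  have hac : AbsolutelyContinuousOnInterval (fun x => f x * exp (-K x)) p q :=
    hf.fun_mul (absolutelyContinuousOnInterval_exp hK.neg)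
  rw [intervalIntegral.integral_neg, hac.integral_deriv_eq_sub] at hmono
  have hKp : K p = 0 := intervalIntegral.integral_same
  have hle : f q * exp (-K q) ≤ f p := by simpa [hKp] using hmono
  calc f q = f q * exp (-K q) * exp (K q) := by rw [mul_assoc, ← exp_add]; simp
    _ ≤ f p * exp (K q) := by gcongr

theorem eq_zero_iff_of_abs_deriv_le {f k : ℝ → ℝ} {p q : ℝ} (hpq : p ≤ q)
    (hf : AbsolutelyContinuousOnInterval f p q) (hk : IntervalIntegrable k volume p q)
    (hf0 : ∀ x ∈ Icc p q, 0 ≤ f x)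
    (hfk : ∀ᵐ x ∂volume.restrict (Icc p q), |deriv f x| ≤ k x * f x) : f p = 0 ↔ f q = 0 := by
  have hforward := le_mul_exp_integral_of_deriv_le hpq hf hk
    (hfk.mono fun x hx => (abs_le.1 hx).2)
  have hbackward := le_mul_exp_integral_of_deriv_le hpq hf.neg hk.neg <| hfk.mono fun x hx => by
    simpa only [deriv.neg, Pi.neg_apply, neg_mul_neg, neg_le] using (abs_le.1 hx).1
  constructor <;> intro h0
  · exact le_antisymm (by simpa [h0] using hforward) (hf0 q ⟨hpq, le_rfl⟩)
  · refine le_antisymm ?_ (hf0 p ⟨le_rfl, hpq⟩)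
    have : f p * exp (∫ t in p..q, (-k) t) ≤ 0 := by simpa [h0] using hbackward
    exact nonpos_of_mul_nonpos_left this (exp_pos _)

theorem pos_or_neg_of_continuousOn_of_ne_zero {X : Type*} [TopologicalSpace X] {s : Set X}
    {f : X → ℝ} (hs : IsPreconnected s) (hf : ContinuousOn f s) (hne : ∀ x ∈ s, f x ≠ 0) :
    (∀ x ∈ s, 0 < f x) ∨ ∀ x ∈ s, f x < 0 := by
  by_contra! ⟨⟨x, hx, hfx⟩, y, hy, hfy⟩
  obtain ⟨z, hz, hfz⟩ := hs.intermediate_value hx hy hf ⟨hfx, hfy⟩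
  exact hne z hz hfz

theorem nonneg_of_pos_on_Ioo {f : ℝ → ℝ} {p q : ℝ} (hpq : p < q) (hf : ContinuousOn f (Icc p q))
    (hpos : ∀ x ∈ Ioo p q, 0 < f x) ⦃x : ℝ⦄ (hx : x ∈ Icc p q) : 0 ≤ f x := by
  rw [← closure_Ioo hpq.ne] at hf hx
  exact le_on_closure (fun x hx => (hpos x hx).le) continuousOn_const hf hx

theorem mul_sub_nonneg_of_isMinOn {f : ℝ → ℝ} {f' x y : ℝ} {s : Set ℝ} (hs : Convex ℝ s)
    (hx : x ∈ s) (hy : y ∈ s) (hf : HasDerivWithinAt f f' s x) (hmin : IsMinOn f s x) :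
    0 ≤ (y - x) * f' := by
  simpa using hmin.localize.hasFDerivWithinAt_nonneg hf.hasFDerivWithinAt
    (sub_mem_posTangentConeAt_of_segment_subset (hs.segment_subset hx hy))

theorem ncard_induction_of_consecutive {α : Type*} [LinearOrder α] {s : Set α} {b c : α}
    {P : ℕ → α → Prop} (hfin : (Ico b c ∩ s).Finite) (hb : b ∈ s) (hc : c ∈ s) (hbc : b ≤ c)
    (zero : P 0 b)
    (succ : ∀ k, ∀ x ∈ s, ∀ y ∈ s, b ≤ x → x < y → y ≤ c → (∀ z ∈ Ioo x y, z ∉ s) →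
      P k x → P (k + 1) y) :
    P (Ico b c ∩ s).ncard c := by
  induction hk : (Ico b c ∩ s).ncard generalizing c with
  | zero =>
    have hempty := (ncard_eq_zero hfin).1 hk
    obtain rfl | hlt := hbc.eq_or_lt
    · exact zero
    · exact absurd (hempty ▸ ⟨⟨le_rfl, hlt⟩, hb⟩ : b ∈ (∅ : Set α)) (notMem_empty b)
  | succ k ih =>
    obtain ⟨x, hx, hmax⟩ := exists_max_image _ id hfin (nonempty_of_ncard_ne_zero (by omega))
    have hsub : Ico b x ∩ s ⊆ Ico b c ∩ s :=
      inter_subset_inter_left _ (Ico_subset_Ico_right hx.1.2.le)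
    have hinsert : Ico b c ∩ s = insert x (Ico b x ∩ s) := by
      refine Subset.antisymm (fun y hy => ?_) (insert_subset hx hsub)
      exact (hmax y hy).eq_or_lt.imp_right fun hyx => ⟨⟨hy.1.1, hyx⟩, hy.2⟩
    rw [hinsert, ncard_insert_of_notMem (fun h => h.1.2.false) (hfin.subset hsub)] at hk
    have hPx : P k x := ih (hfin.subset hsub) hx.2 hx.1.1
      (fun k y hy z hz hby hyz hzx => succ k y hy z hz hby hyz (hzx.trans hx.1.2.le)) (by omega)
    exact succ k x hx.2 c hc hx.1.1 hx.1.2 le_rfl (fun z hz hzs =>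
      (hmax z ⟨⟨hx.1.1.trans hz.1.le, hz.2⟩, hzs⟩).not_gt hz.1) hPx

/-- The Wronskian `u s' - u' s` of two functions `u`, `s` whose derivatives are `v`, `r`. -/
def wronskian (u v s r : ℝ → ℝ) (x : ℝ) : ℝ := u x * r x - v x * s x

theorem isSolOn_sin (w φ c p q : ℝ) :
    IsSolOn (fun _ => w ^ 2) (fun x => sin (φ + w * (x - c)))
      (fun x => w * cos (φ + w * (x - c))) p q := by
  have hphase (x : ℝ) : HasDerivAt (fun x => φ + w * (x - c)) w x := by
    simpa using (((hasDerivAt_id x).sub_const c).const_mul w).const_add φ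
  refine ⟨fun x _ => ?_, fun x _ => ?_⟩
  · simpa only [mul_comm w] using (hphase x).sin.hasDerivWithinAt
  · have hderiv (y : ℝ) : HasDerivAt (fun x => w * cos (φ + w * (x - c)))
        (-(w ^ 2 * sin (φ + w * (y - c)))) y :=
      ((hphase y).cos.const_mul w).congr_deriv (by ring)
    have hint := intervalIntegral.integral_eq_sub_of_hasDerivAt (a := p) (b := x)
      (fun y _ => hderiv y) (Continuous.intervalIntegrable (by fun_prop) _ _)
    rw [intervalIntegral.integral_neg] at hint
    linarith

theorem sin_add_mul_sub_pos {w φ p q x : ℝ} (hw : 0 < w) (hφ : 0 ≤ φ) (hφπ : φ + w * (q - p) ≤ π)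
    (hx : x ∈ Ioo p q) : 0 < sin (φ + w * (x - p)) := by
  have hpx : 0 < w * (x - p) := mul_pos hw (sub_pos.2 hx.1)
  have hxq : w * (x - p) < w * (q - p) := by gcongr; exact hx.2
  exact sin_pos_of_pos_of_lt_pi (by linarith) (by linarith)

theorem lagrange_integrand_nonneg {a b u s : ℝ → ℝ} {p q : ℝ}
    (hab : ∀ᵐ x ∂volume.restrict (Icc p q), b x ≤ a x)
    (hpos : ∀ x ∈ Ioo p q, 0 < u x * s x) :
    0 ≤ᵐ[volume.restrict (Icc p q)] fun x => (a x - b x) * (u x * s x) := by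
  rw [← restrict_Ioo_eq_restrict_Icc] at hab ⊢
  filter_upwards [hab, ae_restrict_mem measurableSet_Ioo] with x hx hxI
  exact mul_nonneg (sub_nonneg.2 hx) (hpos x hxI).le

namespace IsSolOn

variable {a b u v s r : ℝ → ℝ} {p q w : ℝ}

theorem continuousOn (h : IsSolOn a u v p q) : ContinuousOn u (Icc p q) :=
  fun x hx => (h.1 x hx).continuousWithinAt

theorem intervalIntegrable_mul (h : IsSolOn a u v p q) (ha : IntegrableOn a (Icc p q)) {x y : ℝ}
    (hx : x ∈ Icc p q) (hy : y ∈ Icc p q) :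
    IntervalIntegrable (fun t => a t * u t) volume x y :=
  ((ha.mul_continuousOn h.continuousOn isCompact_Icc).mono_set
    (uIcc_subset_Icc hx hy)).intervalIntegrable

theorem mono (h : IsSolOn a u v p q) (ha : IntegrableOn a (Icc p q)) {p' q' : ℝ} (hp : p ≤ p')
    (hq : q' ≤ q) : IsSolOn a u v p' q' := by
  have hsub : Icc p' q' ⊆ Icc p q := Icc_subset_Icc hp hq
  refine ⟨fun x hx => (h.1 x (hsub hx)).mono hsub, fun x hx => ?_⟩
  have hp' : p' ∈ Icc p q := hsub ⟨le_rfl, hx.1.trans hx.2⟩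
  have hpp : p ∈ Icc p q := ⟨le_rfl, hp'.1.trans hp'.2⟩
  rw [h.2 x (hsub hx), h.2 p' hp', ← intervalIntegral.integral_add_adjacent_intervals
    (h.intervalIntegrable_mul ha hpp hp') (h.intervalIntegrable_mul ha hp' (hsub hx))]
  ring

theorem neg (h : IsSolOn a u v p q) : IsSolOn a (fun x => -u x) (fun x => -v x) p q := by
  refine ⟨fun x hx => (h.1 x hx).neg, fun x hx => ?_⟩
  simp only [mul_neg, intervalIntegral.integral_neg, h.2 x hx]
  ring

theorem absolutelyContinuousOnInterval_deriv (h : IsSolOn a u v p q)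
    (ha : IntegrableOn a (Icc p q)) (hpq : p ≤ q) : AbsolutelyContinuousOnInterval v p q := by
  have hint := h.intervalIntegrable_mul ha ⟨le_rfl, hpq⟩ ⟨hpq, le_rfl⟩
  refine absolutelyContinuousOnInterval_of_dist_le (K := 1)
    (hint.absolutelyContinuousOnInterval_intervalIntegral left_mem_uIcc) fun x hx y hy => ?_
  rw [uIcc_of_le hpq] at hx hy
  rw [h.2 x hx, h.2 y hy, dist_sub_left, one_mul]

theorem continuousOn_deriv (h : IsSolOn a u v p q) (ha : IntegrableOn a (Icc p q))
    (hpq : p ≤ q) : ContinuousOn v (Icc p q) :=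
  uIcc_of_le hpq ▸ (h.absolutelyContinuousOnInterval_deriv ha hpq).continuousOn

theorem absolutelyContinuousOnInterval (h : IsSolOn a u v p q) (ha : IntegrableOn a (Icc p q))
    (hpq : p ≤ q) : AbsolutelyContinuousOnInterval u p q := by
  obtain ⟨C, hC⟩ := isCompact_Icc.exists_bound_of_continuousOn (h.continuousOn_deriv ha hpq)
  have hlip : LipschitzOnWith C.toNNReal u (Icc p q) :=
    (convex_Icc p q).lipschitzOnWith_of_nnnorm_hasDerivWithin_le h.1 fun x hx => by
      simpa [← NNReal.coe_le_coe] using .inl (hC x hx)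
  exact (uIcc_of_le hpq ▸ hlip).absolutelyContinuousOnInterval

theorem hasDerivAt (h : IsSolOn a u v p q) {x : ℝ} (hx : x ∈ Ioo p q) : HasDerivAt u (v x) x :=
  (h.1 x (Ioo_subset_Icc_self hx)).hasDerivAt (Icc_mem_nhds hx.1 hx.2)

theorem ae_hasDerivAt (h : IsSolOn a u v p q) :
    ∀ᵐ x ∂volume.restrict (Icc p q), HasDerivAt u (v x) x := by
  rw [← restrict_Ioo_eq_restrict_Icc]
  exact (ae_restrict_mem measurableSet_Ioo).mono fun x hx => h.hasDerivAt hx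

theorem ae_hasDerivAt_deriv (h : IsSolOn a u v p q) (ha : IntegrableOn a (Icc p q))
    (hpq : p ≤ q) : ∀ᵐ x ∂volume.restrict (Icc p q), HasDerivAt v (-(a x * u x)) x := by
  have hint := h.intervalIntegrable_mul ha ⟨le_rfl, hpq⟩ ⟨hpq, le_rfl⟩
  rw [← restrict_Ioo_eq_restrict_Icc, ae_restrict_iff' measurableSet_Ioo]
  filter_upwards [hint.ae_hasDerivAt_integral] with x hderiv hx
  have hxI : x ∈ uIcc p q := Icc_subset_uIcc (Ioo_subset_Icc_self hx)
  refine ((hderiv hxI p left_mem_uIcc).const_sub (v p)).congr_of_eventuallyEq ?_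
  filter_upwards [Icc_mem_nhds hx.1 hx.2] with y hy using h.2 y hy

theorem abs_deriv_energy_le (h : IsSolOn a u v p q) (ha : IntegrableOn a (Icc p q))
    (hpq : p ≤ q) : ∀ᵐ x ∂volume.restrict (Icc p q),
      |deriv (fun x => u x * u x + v x * v x) x| ≤ (1 + |a x|) * (u x * u x + v x * v x) := by
  filter_upwards [h.ae_hasDerivAt, h.ae_hasDerivAt_deriv ha hpq] with x hu hv
  rw [((hu.fun_mul hu).fun_add (hv.fun_mul hv)).deriv]
  calc |v x * u x + u x * v x + (-(a x * u x) * v x + v x * -(a x * u x))|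
      = |1 - a x| * |2 * u x * v x| := by rw [← abs_mul]; ring_nf
    _ ≤ (1 + |a x|) * (u x * u x + v x * v x) := by
        gcongr
        · simpa using abs_sub 1 (a x)
        · exact abs_le.2 ⟨by nlinarith [sq_nonneg (u x + v x)],
            by nlinarith [sq_nonneg (u x - v x)]⟩

theorem energy_eq_zero_iff (h : IsSolOn a u v p q) (ha : IntegrableOn a (Icc p q)) (hpq : p ≤ q) :
    u p * u p + v p * v p = 0 ↔ u q * u q + v q * v q = 0 := by
  have hu := h.absolutelyContinuousOnInterval ha hpq
  have hv := h.absolutelyContinuousOnInterval_deriv ha hpq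
  exact eq_zero_iff_of_abs_deriv_le hpq ((hu.fun_mul hu).fun_add (hv.fun_mul hv))
    (intervalIntegrable_const.add ((intervalIntegrable_iff_integrableOn_Icc_of_le hpq).2 ha).abs)
    (fun _ _ => add_nonneg (mul_self_nonneg _) (mul_self_nonneg _)) (h.abs_deriv_energy_le ha hpq)

theorem eq_zero_of_initial_eq_zero (h : IsSolOn a u v p q) (ha : IntegrableOn a (Icc p q)) {c : ℝ}
    (hc : c ∈ Icc p q) (huc : u c = 0) (hvc : v c = 0) {x : ℝ} (hx : x ∈ Icc p q) : u x = 0 := by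
  have hc0 : u c * u c + v c * v c = 0 := by simp [huc, hvc]
  suffices u x * u x + v x * v x = 0 from (mul_self_add_mul_self_eq_zero.1 this).1
  obtain hcx | hxc := le_total c x
  · exact ((h.mono ha hc.1 hx.2).energy_eq_zero_iff
      (ha.mono_set (Icc_subset_Icc hc.1 hx.2)) hcx).1 hc0
  · exact ((h.mono ha hx.1 hc.2).energy_eq_zero_iff
      (ha.mono_set (Icc_subset_Icc hx.1 hc.2)) hxc).2 hc0

theorem deriv_ne_zero (h : IsSolOn a u v p q) (ha : IntegrableOn a (Icc p q))
    (hnt : ∃ x ∈ Icc p q, u x ≠ 0) {c : ℝ} (hc : c ∈ Icc p q) (huc : u c = 0) : v c ≠ 0 := by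
  obtain ⟨x, hx, hux⟩ := hnt
  exact fun hvc => hux (h.eq_zero_of_initial_eq_zero ha hc huc hvc hx)

theorem finite_zeros (h : IsSolOn a u v p q) (ha : IntegrableOn a (Icc p q))
    (hnt : ∃ x ∈ Icc p q, u x ≠ 0) : (Icc p q ∩ {x | u x = 0}).Finite := by
  have hcod : {x | u x ≠ 0} ∈ codiscreteWithin (Icc p q) := by
    refine mem_codiscreteWithin_iff_forall_mem_nhdsNE.2 fun x hx => ?_
    have hne : ∀ᶠ z in 𝓝[Icc p q \ {x}] x, u z ≠ 0 := by
      by_cases hux : u x = 0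
      · exact (h.1 x hx).eventually_ne (h.deriv_ne_zero ha hnt hx hux)
      · exact ((h.continuousOn x hx).mono sdiff_subset).eventually_ne hux
    rw [eventually_nhdsWithin_iff] at hne
    refine eventually_nhdsWithin_iff.2 (hne.mono fun z hz hzx => ?_)
    exact (em (z ∈ Icc p q)).imp (fun hzI => hz ⟨hzI, hzx⟩) id
  simpa [sdiff_eq, compl_ofPred] using isCompact_Icc.finite_sdiff_of_mem_codiscreteWithin hcod

theorem integral_lagrange (hu : IsSolOn a u v p q) (ha : IntegrableOn a (Icc p q))
    (hs : IsSolOn b s r p q) (hb : IntegrableOn b (Icc p q)) (hpq : p ≤ q) :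
    ∫ x in p..q, (a x - b x) * (u x * s x) = wronskian u v s r q - wronskian u v s r p := by
  have hac : AbsolutelyContinuousOnInterval (wronskian u v s r) p q :=
    ((hu.absolutelyContinuousOnInterval ha hpq).fun_mul
      (hs.absolutelyContinuousOnInterval_deriv hb hpq)).fun_sub
    ((hu.absolutelyContinuousOnInterval_deriv ha hpq).fun_mul
      (hs.absolutelyContinuousOnInterval hb hpq))
  rw [← hac.integral_deriv_eq_sub]
  refine intervalIntegral.integral_congr_ae_restrict ?_
  rw [uIoc_of_le hpq, restrict_Ioc_eq_restrict_Icc]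
  filter_upwards [hu.ae_hasDerivAt, hu.ae_hasDerivAt_deriv ha hpq, hs.ae_hasDerivAt,
    hs.ae_hasDerivAt_deriv hb hpq] with x hux hvx hsx hrx
  have hd : HasDerivAt (wronskian u v s r) _ x := (hux.fun_mul hrx).fun_sub (hvx.fun_mul hsx)
  rw [hd.deriv]
  ring

theorem wronskian_le_wronskian (hu : IsSolOn a u v p q) (ha : IntegrableOn a (Icc p q))
    (hs : IsSolOn b s r p q) (hb : IntegrableOn b (Icc p q)) (hpq : p ≤ q)
    (hab : ∀ᵐ x ∂volume.restrict (Icc p q), b x ≤ a x) (hpos : ∀ x ∈ Ioo p q, 0 < u x * s x) :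
    wronskian u v s r p ≤ wronskian u v s r q := by
  rw [← sub_nonneg, ← hu.integral_lagrange ha hs hb hpq]
  exact intervalIntegral.integral_nonneg_of_ae_restrict hpq (lagrange_integrand_nonneg hab hpos)

theorem ae_eq_of_wronskian_eq (hu : IsSolOn a u v p q) (ha : IntegrableOn a (Icc p q))
    (hs : IsSolOn b s r p q) (hb : IntegrableOn b (Icc p q)) (hpq : p ≤ q)
    (hab : ∀ᵐ x ∂volume.restrict (Icc p q), b x ≤ a x) (hpos : ∀ x ∈ Ioo p q, 0 < u x * s x)
    (heq : wronskian u v s r p = wronskian u v s r q) : a =ᵐ[volume.restrict (Icc p q)] b := by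
  have hint : IntegrableOn (fun x => (a x - b x) * (u x * s x)) (Icc p q) :=
    (ha.sub hb).mul_continuousOn (hu.continuousOn.mul hs.continuousOn) isCompact_Icc
  have hzero : ∫ x in Icc p q, (a x - b x) * (u x * s x) = 0 := by
    rw [integral_Icc_eq_integral_Ioc, ← intervalIntegral.integral_of_le hpq,
      hu.integral_lagrange ha hs hb hpq, heq, sub_self]
  rw [integral_eq_zero_iff_of_nonneg_ae (lagrange_integrand_nonneg hab hpos) hint] at hzero
  rw [← restrict_Ioo_eq_restrict_Icc] at hzero ⊢
  filter_upwards [hzero, ae_restrict_mem measurableSet_Ioo] with x hx hxI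
  exact sub_eq_zero.1 ((mul_eq_zero.1 hx).resolve_right (hpos x hxI).ne')

theorem wronskian_sin_le {φ r : ℝ} (h : IsSolOn a u v p q) (ha : IntegrableOn a (Icc p q))
    (hw : 0 < w) (hwa : ∀ᵐ x ∂volume.restrict (Icc p q), w ^ 2 ≤ a x)
    (hpos : ∀ x ∈ Ioo p q, 0 < u x) (hr : r ∈ Icc p q) (hφ : 0 ≤ φ)
    (hφπ : φ + w * (r - p) ≤ π) :
    u p * (w * cos φ) - v p * sin φ ≤
      u r * (w * cos (φ + w * (r - p))) - v r * sin (φ + w * (r - p)) := by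
  have hsub : Icc p r ⊆ Icc p q := Icc_subset_Icc_right hr.2
  have hle := (h.mono ha le_rfl hr.2).wronskian_le_wronskian (ha.mono_set hsub)
    (isSolOn_sin w φ p p r) continuousOn_const.integrableOn_Icc hr.1
    (ae_restrict_of_ae_restrict_of_subset hsub hwa) fun x hx =>
      mul_pos (hpos x ⟨hx.1, hx.2.trans_le hr.2⟩) (sin_add_mul_sub_pos hw hφ hφπ hx)
  simpa [wronskian] using hle

theorem neg_pos_of_ne_zero (h : IsSolOn a u v p q) (hne : ∀ x ∈ Ioo p q, u x ≠ 0)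
    (hpos : ¬∀ x ∈ Ioo p q, 0 < u x) : ∀ x ∈ Ioo p q, 0 < -u x := by
  have hneg := (pos_or_neg_of_continuousOn_of_ne_zero isPreconnected_Ioo
    (h.continuousOn.mono Ioo_subset_Icc_self) hne).resolve_left hpos
  exact fun x hx => neg_pos.2 (hneg x hx)

theorem sub_le_pi_div_of_ne_zero (h : IsSolOn a u v p q) (ha : IntegrableOn a (Icc p q))
    (hw : 0 < w) (hwa : ∀ᵐ x ∂volume.restrict (Icc p q), w ^ 2 ≤ a x)
    (hne : ∀ x ∈ Ioo p q, u x ≠ 0) : q - p ≤ π / w := by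
  wlog hpos : ∀ x ∈ Ioo p q, 0 < u x generalizing u v
  · exact this h.neg (fun x hx => neg_ne_zero.2 (hne x hx)) (h.neg_pos_of_ne_zero hne hpos)
  by_contra! hlt
  have hπw : 0 < π / w := div_pos pi_pos hw
  have hpq : p < q := by linarith
  have hend : w * (p + π / w - p) = π := by field_simp; ring
  have hW := h.wronskian_sin_le ha hw hwa hpos (r := p + π / w) (φ := 0)
    ⟨by linarith, by linarith⟩ le_rfl (by rw [zero_add, hend])
  simp only [zero_add, hend, cos_zero, sin_zero, cos_pi, sin_pi, mul_one, mul_zero, sub_zero] at hW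
  have hup := nonneg_of_pos_on_Ioo hpq h.continuousOn hpos ⟨le_rfl, hpq.le⟩
  have hur := hpos (p + π / w) ⟨by linarith, by linarith⟩
  nlinarith

theorem ae_eq_sq_of_sub_eq_pi_div (h : IsSolOn a u v p q) (ha : IntegrableOn a (Icc p q))
    (hw : 0 < w) (hwa : ∀ᵐ x ∂volume.restrict (Icc p q), w ^ 2 ≤ a x)
    (hne : ∀ x ∈ Ioo p q, u x ≠ 0) (heq : q - p = π / w) :
    a =ᵐ[volume.restrict (Icc p q)] fun _ => w ^ 2 := by
  wlog hpos : ∀ x ∈ Ioo p q, 0 < u x generalizing u v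
  · exact this h.neg (fun x hx => neg_ne_zero.2 (hne x hx)) (h.neg_pos_of_ne_zero hne hpos)
  have hpq : p < q := sub_pos.1 (heq ▸ div_pos pi_pos hw)
  have hend : w * (q - p) = π := by rw [heq]; field_simp
  have hsinpos : ∀ x ∈ Ioo p q, 0 < u x * sin (0 + w * (x - p)) := fun x hx =>
    mul_pos (hpos x hx) (sin_add_mul_sub_pos hw le_rfl (by rw [zero_add, hend]) hx)
  have hs := isSolOn_sin w 0 p p q
  have hc : IntegrableOn (fun _ => w ^ 2) (Icc p q) := continuousOn_const.integrableOn_Icc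
  refine h.ae_eq_of_wronskian_eq ha hs hc hpq.le hwa hsinpos ?_
  refine (h.wronskian_le_wronskian ha hs hc hpq.le hwa hsinpos).antisymm ?_
  have hup := nonneg_of_pos_on_Ioo hpq h.continuousOn hpos ⟨le_rfl, hpq.le⟩
  have huq := nonneg_of_pos_on_Ioo hpq h.continuousOn hpos ⟨hpq.le, le_rfl⟩
  simp only [wronskian, zero_add, sub_self, hend, cos_zero, sin_zero, cos_pi, sin_pi, mul_zero,
    mul_one, sub_zero]
  nlinarith

theorem sub_le_pi_div_two_mul_of_ne_zero (h : IsSolOn a u v p q) (ha : IntegrableOn a (Icc p q))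
    (hw : 0 < w) (hwa : ∀ᵐ x ∂volume.restrict (Icc p q), w ^ 2 ≤ a x)
    (hne : ∀ x ∈ Ioo p q, u x ≠ 0) (hne' : ∀ x ∈ Ioo p q, v x ≠ 0) : q - p ≤ π / (2 * w) := by
  wlog hpos : ∀ x ∈ Ioo p q, 0 < u x generalizing u v
  · exact this h.neg (fun x hx => neg_ne_zero.2 (hne x hx))
      (fun x hx => neg_ne_zero.2 (hne' x hx)) (h.neg_pos_of_ne_zero hne hpos)
  by_contra! hlt
  have hπw : 0 < π / (2 * w) := by positivity
  have hpq : p < q := by linarith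
  set r := p + π / (2 * w) with hr
  have hrI : r ∈ Ioo p q := ⟨by linarith, by linarith⟩
  have hend : w * (r - p) = π / 2 := by rw [hr]; field_simp; ring
  have hup := nonneg_of_pos_on_Ioo hpq h.continuousOn hpos ⟨le_rfl, hpq.le⟩
  have hur := hpos r hrI
  have hW (φ : ℝ) (hφ : 0 ≤ φ) (hφπ : φ + π / 2 ≤ π) :=
    h.wronskian_sin_le ha hw hwa hpos ⟨hrI.1.le, hrI.2.le⟩ hφ (hend ▸ hφπ)
  have hcv := h.continuousOn_deriv ha hpq.le
  obtain hv | hv := pos_or_neg_of_continuousOn_of_ne_zero isPreconnected_Ioo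
    (hcv.mono Ioo_subset_Icc_self) hne'
  · have hWsin := hW 0 le_rfl (by linarith [pi_pos])
    simp only [hend, zero_add, cos_zero, sin_zero, cos_pi_div_two, sin_pi_div_two] at hWsin
    nlinarith [hv r hrI]
  · have hvp := nonneg_of_pos_on_Ioo hpq hcv.neg (fun x hx => neg_pos.2 (hv x hx))
      ⟨le_rfl, hpq.le⟩
    rw [Pi.neg_apply, neg_nonneg] at hvp
    have hWcos := hW (π / 2) (by positivity) (by linarith)
    simp only [hend, add_halves, cos_pi_div_two, sin_pi_div_two, cos_pi, sin_pi] at hWcos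
    nlinarith

theorem deriv_mul_deriv_neg (h : IsSolOn a u v p q) (ha : IntegrableOn a (Icc p q)) (hpq : p < q)
    (hup : u p = 0) (huq : u q = 0) (hne : ∀ x ∈ Ioo p q, u x ≠ 0) : v p * v q < 0 := by
  wlog hpos : ∀ x ∈ Ioo p q, 0 < u x generalizing u v
  · simpa using this h.neg (by simpa) (by simpa) (fun x hx => neg_ne_zero.2 (hne x hx))
      (h.neg_pos_of_ne_zero hne hpos)
  have hp : p ∈ Icc p q := ⟨le_rfl, hpq.le⟩
  have hq : q ∈ Icc p q := ⟨hpq.le, le_rfl⟩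
  obtain ⟨x, hx⟩ := nonempty_Ioo.2 hpq
  have hnt : ∃ x ∈ Icc p q, u x ≠ 0 := ⟨x, Ioo_subset_Icc_self hx, hne x hx⟩
  have hu := nonneg_of_pos_on_Ioo hpq h.continuousOn hpos
  have hvp : 0 ≤ (q - p) * v p := mul_sub_nonneg_of_isMinOn (convex_Icc p q) hp hq (h.1 p hp)
    fun x hx => hup.trans_le (hu hx)
  have hvq : 0 ≤ (p - q) * v q := mul_sub_nonneg_of_isMinOn (convex_Icc p q) hq hp (h.1 q hq)
    fun x hx => huq.trans_le (hu hx)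
  exact mul_neg_of_pos_of_neg
    (((mul_nonneg_iff_of_pos_left (sub_pos.2 hpq)).1 hvp).lt_of_ne' (h.deriv_ne_zero ha hnt hp hup))
    ((nonpos_of_mul_nonneg_right hvq (sub_neg.2 hpq)).lt_of_ne (h.deriv_ne_zero ha hnt hq huq))

theorem neg_one_pow_ncard_zeros_mul_pos (h : IsSolOn a u v p q) (ha : IntegrableOn a (Icc p q))
    (hpq : p ≤ q) (hnt : ∃ x ∈ Icc p q, u x ≠ 0) (hup : u p = 0) (huq : u q = 0) :
    0 < (-1) ^ (Ico p q ∩ {x | u x = 0}).ncard * (v p * v q) := by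
  have hfin := (h.finite_zeros ha hnt).subset (inter_subset_inter_left _ Ico_subset_Icc_self)
  refine ncard_induction_of_consecutive (P := fun k x => 0 < (-1) ^ k * (v p * v x))
    hfin hup huq hpq ?_ fun k x hux y huy hpx hxy hyq hgap hk => ?_
  · have := mul_self_pos.2 (h.deriv_ne_zero ha hnt ⟨le_rfl, hpq⟩ hup)
    simpa
  · have hsub : Icc x y ⊆ Icc p q := Icc_subset_Icc hpx hyq
    have hneg := (h.mono ha hpx hyq).deriv_mul_deriv_neg (ha.mono_set hsub) hxy hux huy hgap
    have hvx := mul_self_pos.2 (h.deriv_ne_zero ha hnt ⟨hpx, hxy.le.trans hyq⟩ hux)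
    refine (mul_pos_iff_of_pos_right hvx).1 ?_
    calc 0 < (-1) ^ k * (v p * v x) * -(v x * v y) := mul_pos hk (neg_pos.2 hneg)
      _ = (-1) ^ (k + 1) * (v p * v y) * (v x * v x) := by ring

theorem odd_ncard_zeros (h : IsSolOn a u v p q) (ha : IntegrableOn a (Icc p q)) (hpq : p ≤ q)
    (hnt : ∃ x ∈ Icc p q, u x ≠ 0) (hup : u p = 0) (huq : u q = 0) (hv : v p + v q = 0) :
    Odd (Ico p q ∩ {x | u x = 0}).ncard := by
  by_contra heven
  have hpos := h.neg_one_pow_ncard_zeros_mul_pos ha hpq hnt hup huq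
  rw [(Nat.not_odd_iff_even.1 heven).neg_one_pow, one_mul, eq_neg_of_add_eq_zero_right hv] at hpos
  nlinarith [mul_self_nonneg (v p)]

theorem sub_le_ncard_zeros_mul_and_ae_eq (h : IsSolOn a u v p q) (ha : IntegrableOn a (Icc p q))
    (hpq : p ≤ q) (hnt : ∃ x ∈ Icc p q, u x ≠ 0) (hw : 0 < w)
    (hwa : ∀ᵐ x ∂volume.restrict (Icc p q), w ^ 2 ≤ a x) (hup : u p = 0) (huq : u q = 0) :
    q - p ≤ (Ico p q ∩ {x | u x = 0}).ncard * (π / w) ∧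
      (q - p = (Ico p q ∩ {x | u x = 0}).ncard * (π / w) →
        a =ᵐ[volume.restrict (Icc p q)] fun _ => w ^ 2) := by
  have hfin := (h.finite_zeros ha hnt).subset (inter_subset_inter_left _ Ico_subset_Icc_self)
  refine ncard_induction_of_consecutive (P := fun k x => x - p ≤ k * (π / w) ∧
      (x - p = k * (π / w) → a =ᵐ[volume.restrict (Icc p x)] fun _ => w ^ 2))
    hfin hup huq hpq ⟨by simp, fun _ => by simp [EventuallyEq]⟩ ?_
  rintro k x - y - hpx hxy hyq hgap ⟨hle, hae⟩
  have hsub : Icc x y ⊆ Icc p q := Icc_subset_Icc hpx hyq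
  have hxysol := h.mono ha hpx hyq
  have haxy := ha.mono_set hsub
  have hwaxy := ae_restrict_of_ae_restrict_of_subset hsub hwa
  have hlexy := hxysol.sub_le_pi_div_of_ne_zero haxy hw hwaxy hgap
  rw [Nat.cast_succ, add_one_mul]
  refine ⟨by linarith, fun heq => ?_⟩
  have haepx := hae (by linarith)
  have haexy := hxysol.ae_eq_sq_of_sub_eq_pi_div haxy hw hwaxy hgap (by linarith)
  rw [← Icc_union_Icc_eq_Icc hpx hxy.le]
  rw [EventuallyEq, ae_restrict_union_iff]
  exact ⟨haepx, haexy⟩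

theorem sub_lt_ncard_zeros_mul (h : IsSolOn a u v p q) (ha : IntegrableOn a (Icc p q))
    (hpq : p ≤ q) (hnt : ∃ x ∈ Icc p q, u x ≠ 0) (hw : 0 < w)
    (hwa : ∀ᵐ x ∂volume.restrict (Icc p q), w ^ 2 ≤ a x)
    (hne : ¬a =ᵐ[volume.restrict (Icc p q)] fun _ => w ^ 2) (hup : u p = 0) (huq : u q = 0) :
    q - p < (Ico p q ∩ {x | u x = 0}).ncard * (π / w) := by
  obtain ⟨hle, hae⟩ := h.sub_le_ncard_zeros_mul_and_ae_eq ha hpq hnt hw hwa hup huq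
  exact hle.lt_of_ne fun heq => hne (hae heq)

end IsSolOn

theorem Prec.not_ae_eq {T : ℝ} {c d : ℝ → ℝ} (h : Prec T c d) :
    ¬d =ᵐ[volume.restrict (Icc 0 T)] c := by
  intro heq
  have hae := (ae_restrict_iff' measurableSet_Icc).1 heq
  exact h.2.ne' (measure_eq_zero_iff_ae_notMem.2
    (hae.mono fun x hx hmem => hmem.2.ne' (hx hmem.1)))

theorem lamT_eq_sq (T : ℝ) (n : ℕ) : lamT T n = ((2 * (n : ℝ) - 1) * π / T) ^ 2 := by
  rw [lamT]; ring

theorem stmt8 (T : ℝ) (hT : 0 < T) (n : ℕ) (hn : 1 ≤ n)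
    (a : ℝ → ℝ) (ha : a ∈ LambdaTildeN T n)
    (u v : ℝ → ℝ) (hsol : AntiperiodicSol T a u v)
    (hnt : ∃ x ∈ Set.Icc 0 T, u x ≠ 0)
    (h0 : u 0 = 0) (hTz : u T = 0) :
    (Set.Ico 0 T ∩ {x | u x = 0}).Finite ∧
    Odd (Set.Ico 0 T ∩ {x | u x = 0}).ncard ∧
    2 * n + 1 ≤ (Set.Ico 0 T ∩ {x | u x = 0}).ncard ∧
    (∀ x y : ℝ, x ∈ Set.Icc 0 T → y ∈ Set.Icc 0 T → x < y →
      ((u x = 0 ∧ v y = 0) ∨ (v x = 0 ∧ u y = 0)) →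
      (∀ z : ℝ, x < z → z < y → u z ≠ 0 ∧ v z ≠ 0) →
      y - x ≤ T / (2 * (2 * (n : ℝ) - 1))) := by
  obtain ⟨⟨-, -, hint⟩, hprec, -⟩ := ha
  obtain ⟨h, -, hv⟩ := hsol
  have hn' : (0 : ℝ) < 2 * n - 1 := by have : (1 : ℝ) ≤ n := mod_cast hn; linarith
  have hw : 0 < (2 * n - 1) * π / T := by positivity
  rw [lamT_eq_sq] at hprec
  have hfin := (h.finite_zeros hint hnt).subset (inter_subset_inter_left _ Ico_subset_Icc_self)
  have hodd := h.odd_ncard_zeros hint hT.le hnt h0 hTz hv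
  refine ⟨hfin, hodd, ?_, fun x y hx hy _ _ hgap => ?_⟩
  · have hlt := h.sub_lt_ncard_zeros_mul hint hT.le hnt hw hprec.1 hprec.not_ae_eq h0 hTz
    have hcard : 2 * (n : ℝ) - 1 < (Ico 0 T ∩ {x | u x = 0}).ncard := by
      rw [sub_zero] at hlt
      field_simp at hlt
      exact hlt
    have hcard' : 2 * n < (Ico 0 T ∩ {x | u x = 0}).ncard + 1 := by
      exact_mod_cast sub_lt_iff_lt_add.1 hcard
    obtain ⟨j, hj⟩ := hodd
    omega
  · have hsub : Icc x y ⊆ Icc 0 T := Icc_subset_Icc hx.1 hy.2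
    have hquarter := (h.mono hint hx.1 hy.2).sub_le_pi_div_two_mul_of_ne_zero
      (hint.mono_set hsub) hw (ae_restrict_of_ae_restrict_of_subset hsub hprec.1)
      (fun z hz => (hgap z hz.1 hz.2).1) (fun z hz => (hgap z hz.1 hz.2).2)
    convert hquarter using 1
    field_simp
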